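/- arXiv:1910.04022 — 2 statements merged into one kernel-verified Lean document; each statement's English description precedes it below -/
import Mathlib

section
/- Let G be a finite simple graph on M vertices with adjacency matrix A, and let D(x) be the 2M×2M matrix [[A, xI],[xI, A]] (the adjacency matrix of the prism G □ P₂(x)). Then the signless displaced GBS polynomial equals the signless matching polynomial of the prism: Σ_{S ⊆ [M]} (μ⁺(A_{S,S}, z))² x^{M−|S|} = μ⁺(D(x), z), where μ⁺(B, z) = Σ_{T} haf(B_{T,T}) z^{dim(B)−|T|} is the signless matching polynomial of the weighted graph with adjacency matrix B. -/
open Finset Polynomial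

/-- The hafnian of an `n × n` matrix: `(1/((n/2)! 2^(n/2))) ∑_{σ} ∏_j A_{σ(2j), σ(2j+1)}`,
taken to be `0` when `n` is odd and `1` for the empty matrix. -/
noncomputable def haf {F : Type*} [Field F] {n : ℕ} (A : Matrix (Fin n) (Fin n) F) : F :=
  if h : 2 ∣ n then
    (((n / 2).factorial * 2 ^ (n / 2) : ℕ) : F)⁻¹ *
      ∑ σ : Equiv.Perm (Fin n), ∏ j : Fin (n / 2),
        A (σ ⟨2 * j.1, by have h1 := Nat.div_mul_cancel h; have h2 := j.isLt; omega⟩)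
          (σ ⟨2 * j.1 + 1, by have h1 := Nat.div_mul_cancel h; have h2 := j.isLt; omega⟩)
  else 0

/-- The principal submatrix of `A` indexed by the subset `S` of the rows/columns. -/
def subm {F : Type*} {M : ℕ} (A : Matrix (Fin M) (Fin M) F) (S : Finset (Fin M)) :
    Matrix (Fin S.card) (Fin S.card) F :=
  fun i j => A (S.orderEmbOfFin rfl i) (S.orderEmbOfFin rfl j)

/-- The GBS polynomial `∑_{S ⊆ V} (-1)^{|S|/2} haf(A_S)² x^{M-|S|}`. -/
noncomputable def GBS {F : Type*} [Field F] {M : ℕ} (A : Matrix (Fin M) (Fin M) F) :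
    Polynomial F :=
  ∑ S : Finset (Fin M),
    Polynomial.C ((-1 : F) ^ (S.card / 2) * (haf (subm A S)) ^ 2) * Polynomial.X ^ (M - S.card)

/-- The signless GBS polynomial `∑_{S ⊆ V} haf(A_S)² x^{M-|S|}`. -/
noncomputable def GBSplus {F : Type*} [Field F] {M : ℕ} (A : Matrix (Fin M) (Fin M) F) :
    Polynomial F :=
  ∑ S : Finset (Fin M), Polynomial.C ((haf (subm A S)) ^ 2) * Polynomial.X ^ (M - S.card)

/-- The signless matching polynomial `μ⁺(A, z) = ∑_{T} haf(A_{T,T}) z^{M-|T|}`. -/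
noncomputable def muPlus {F : Type*} [Field F] {M : ℕ} (A : Matrix (Fin M) (Fin M) F) :
    Polynomial F :=
  ∑ S : Finset (Fin M), Polynomial.C (haf (subm A S)) * Polynomial.X ^ (M - S.card)

/-- The (signed) matching polynomial `μ(A, z) = ∑_{T} (-1)^{|T|/2} haf(A_{T,T}) z^{M-|T|}`. -/
noncomputable def matchPoly {F : Type*} [Field F] {M : ℕ} (A : Matrix (Fin M) (Fin M) F) :
    Polynomial F :=
  ∑ S : Finset (Fin M),
    Polynomial.C ((-1 : F) ^ (S.card / 2) * haf (subm A S)) * Polynomial.X ^ (M - S.card)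

/-- The adjacency matrix `[[A, xI],[xI, A]]` of the prism `G □ P₂(x)` over the graph
with adjacency matrix `A`. -/
noncomputable def prism {F : Type*} [Field F] {M : ℕ} (A : Matrix (Fin M) (Fin M) F) (x : F) :
    Matrix (Fin (M + M)) (Fin (M + M)) F :=
  Matrix.submatrix (Matrix.fromBlocks A (x • 1) (x • 1) A) finSumFinEquiv.symm finSumFinEquiv.symm

/-- The adjacency matrix `A₁ ⊕ A₂` of the disjoint union of two graphs. -/
def dsum {F : Type*} [Zero F] {M N : ℕ} (A : Matrix (Fin M) (Fin M) F)
    (B : Matrix (Fin N) (Fin N) F) : Matrix (Fin (M + N)) (Fin (M + N)) F :=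
  Matrix.submatrix (Matrix.fromBlocks A 0 0 B) finSumFinEquiv.symm finSumFinEquiv.symm

/-!
In the commutative algebra spanned by the products `e_S` of vertex variables with `e_a ^ 2 = 0`,
whose multiplication on coefficients is subset convolution, the generating function of the
hafnians of all principal submatrices of `A` is `exp (½ ∑ A a b e_a e_b)`. Comparing coefficients
in its Euler equation characterises the hafnians by a recursion, and shows that adding matrices
convolves hafnians while direct sums multiply them. The prism is the sum of `A ⊕ A` and the rungs
`x e_a e_a'`, and only vertex sets `U ∪ U'` consisting of whole rungs have a nonzero rung hafnian,
namely `x ^ |U|`. As `μ⁺` is the convolution of the hafnians with `S ↦ z ^ |S|`, the sum over `U`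
that this leaves is the displaced GBS polynomial, with `S` the complement of `U`.
-/

section SubsetConv

variable {V R : Type*} [DecidableEq V] [CommSemiring R]

/-- The subset convolution of two set functions: the product of `∑ f S e_S` and `∑ g S e_S` when
the commuting variables `e_a` square to zero. -/
def subsetConv (f g : Finset V → R) (S : Finset V) : R :=
  ∑ U ∈ S.powerset, f U * g (S \ U)

local infixl:70 " ⋆ " => subsetConv

lemma subsetConv_comm (f g : Finset V → R) : f ⋆ g = g ⋆ f := by
  funext S
  refine sum_nbij' (S \ ·) (S \ ·) ?_ ?_ ?_ ?_ ?_ <;> intro U hU <;> rw [mem_powerset] at hU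
  · simp
  · simp
  · exact Finset.sdiff_sdiff_eq_self hU
  · exact Finset.sdiff_sdiff_eq_self hU
  · rw [Finset.sdiff_sdiff_eq_self hU, mul_comm]

lemma subsetConv_assoc (f g h : Finset V → R) : f ⋆ g ⋆ h = f ⋆ (g ⋆ h) := by
  funext S
  simp only [subsetConv, sum_mul, mul_sum, sum_sigma']
  refine sum_nbij' (fun p ↦ ⟨p.2, p.1 \ p.2⟩) (fun p ↦ ⟨p.1 ∪ p.2, p.1⟩) ?_ ?_ ?_ ?_ ?_ <;>
    rintro ⟨P, Q⟩ hPQ <;>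
    simp only [mem_sigma, mem_powerset, Sigma.mk.injEq, heq_eq_eq, and_true, true_and] at hPQ ⊢
  · exact ⟨hPQ.2.trans hPQ.1, sdiff_subset_sdiff hPQ.1 subset_rfl⟩
  · exact ⟨union_subset hPQ.1 (hPQ.2.trans sdiff_subset), subset_union_left⟩
  · exact union_sdiff_of_subset hPQ.2
  · exact union_sdiff_cancel_left (disjoint_sdiff.mono_right hPQ.2)
  · rw [mul_assoc, show (S \ Q) \ (P \ Q) = S \ P by grind]

lemma subsetConv_map {W : Type*} [DecidableEq W] (f g : Finset V → R) (e : W ↪ V) (S : Finset W) :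
    (f ⋆ g) (S.map e) = ((fun T ↦ f (T.map e)) ⋆ fun T ↦ g (T.map e)) S := by
  have powerset_map : (S.map e).powerset = S.powerset.map (mapEmbedding e).toEmbedding := by
    ext T
    simp [subset_map_iff, eq_comm]
  simp [subsetConv, powerset_map, Finset.map_sdiff]

lemma card_mul_subsetConv (f g : Finset V → R) (S : Finset V) :
    #S * (f ⋆ g) S = ((fun T ↦ #T * f T) ⋆ g) S + (f ⋆ fun T ↦ #T * g T) S := by
  simp only [subsetConv, mul_sum, ← sum_add_distrib]
  refine sum_congr rfl fun U hU ↦ ?_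
  rw [← card_sdiff_add_card_eq_card (mem_powerset.1 hU)]
  push_cast
  ring

omit [DecidableEq V] in
lemma sum_powerset_toLeft_toRight {W : Type*} (F : Finset V → Finset W → R)
    (S : Finset (V ⊕ W)) :
    ∑ P ∈ S.powerset, F P.toLeft P.toRight =
      ∑ U ∈ S.toLeft.powerset, ∑ T ∈ S.toRight.powerset, F U T := by
  rw [← sum_product']
  refine sum_equiv sumEquiv.toEquiv (fun P ↦ ?_) fun _ _ ↦ rfl
  rw [mem_product, mem_powerset, mem_powerset, mem_powerset, ← disjSum_subset]
  exact (congrArg (· ⊆ S) toLeft_disjSum_toRight).symm.to_iff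

lemma subsetConv_toLeft_mul_toRight {W : Type*} [DecidableEq W] (f f' : Finset V → R)
    (g g' : Finset W → R) :
    ((fun S : Finset (V ⊕ W) ↦ f S.toLeft * g S.toRight) ⋆
        fun S ↦ f' S.toLeft * g' S.toRight) =
      fun S ↦ (f ⋆ f') S.toLeft * (g ⋆ g') S.toRight := by
  funext S
  simp only [subsetConv, toLeft_sdiff, toRight_sdiff]
  rw [sum_powerset_toLeft_toRight
    fun U T ↦ f U * g T * (f' (S.toLeft \ U) * g' (S.toRight \ T)), sum_mul_sum]
  simp only [mul_mul_mul_comm]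

lemma subsetConv_diagonal_univ [Fintype V] (d f g : Finset V → R) :
    ((fun S : Finset (V ⊕ V) ↦ if S.toLeft = S.toRight then d S.toLeft else 0) ⋆
        fun S ↦ f S.toLeft * g S.toRight) univ =
      ∑ U, d U * (f Uᶜ * g Uᶜ) := by
  have compl_disjSum (S T : Finset V) : (S.disjSum T)ᶜ = Sᶜ.disjSum Tᶜ := by
    ext (_ | _) <;> simp
  simp only [subsetConv, ← compl_eq_univ_sdiff]
  rw [powerset_univ, ← sumEquiv.symm.toEquiv.sum_comp, Fintype.sum_prod_type]
  simp [sumEquiv, compl_disjSum]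

end SubsetConv

local infixl:70 " ⋆ " => subsetConv

section IsHafnian

variable {V W R : Type*} [DecidableEq V] [DecidableEq W] [CommSemiring R]

/-- Multiplication of a set function by the quadratic form `∑ A a b e_a e_b`, in the algebra of
subset convolution. -/
def edgeSum (A : Matrix V V R) (f : Finset V → R) (S : Finset V) : R :=
  ∑ a ∈ S, ∑ b ∈ S.erase a, A a b * f ((S.erase a).erase b)

/-- `h S` is the hafnian of the principal submatrix of `A` on `S`, for every `S`. This is expressed
by the Euler equation of `exp (½ ∑ A a b e_a e_b)`: each vertex of `S` in turn is matched, and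
the edge at that vertex is removed. -/
structure IsHafnian (A : Matrix V V R) (h : Finset V → R) : Prop where
  empty : h ∅ = 1
  card_mul : ∀ S, #S * h S = edgeSum A h S

lemma sum_powerset_mul_sum_sdiff (f : Finset V → R) (G : V → Finset V → R) (S : Finset V) :
    ∑ U ∈ S.powerset, f U * ∑ a ∈ S \ U, G a ((S \ U).erase a) =
      ∑ a ∈ S, ∑ U ∈ (S.erase a).powerset, f U * G a (S.erase a \ U) := by
  simp only [mul_sum, erase_sdiff_comm]
  refine sum_comm' fun U a ↦ ?_
  simp only [mem_powerset, mem_sdiff, subset_erase]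
  tauto

lemma subsetConv_edgeSum (f g : Finset V → R) (A : Matrix V V R) :
    f ⋆ edgeSum A g = edgeSum A (f ⋆ g) := by
  funext S
  simp only [subsetConv, edgeSum]
  rw [sum_powerset_mul_sum_sdiff f fun a T ↦ ∑ b ∈ T, A a b * g (T.erase b)]
  refine sum_congr rfl fun a _ ↦ ?_
  rw [sum_powerset_mul_sum_sdiff f fun b T ↦ A a b * g T]
  simp only [mul_sum, mul_left_comm]

lemma edgeSum_map (A : Matrix V V R) (f : Finset V → R) (e : W ↪ V) (S : Finset W) :
    edgeSum A f (S.map e) = edgeSum (A.submatrix e e) (fun T ↦ f (T.map e)) S := by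
  simp [edgeSum, ← map_erase]

lemma edgeSum_fromBlocks (A : Matrix V V R) (B : Matrix V W R) (C : Matrix W V R)
    (D : Matrix W W R) (f : Finset (V ⊕ W) → R) (S : Finset V) (T : Finset W) :
    edgeSum (.fromBlocks A B C D) f (S.disjSum T) =
      edgeSum A (fun P ↦ f (P.disjSum T)) S +
        ∑ a ∈ S, ∑ b ∈ T, B a b * f ((S.erase a).disjSum (T.erase b)) +
      (∑ b ∈ T, ∑ a ∈ S, C b a * f ((S.erase a).disjSum (T.erase b)) +
        edgeSum D (fun P ↦ f (S.disjSum P)) T) := by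
  have erase_inl (S : Finset V) (T : Finset W) (a : V) :
      (S.disjSum T).erase (.inl a) = (S.erase a).disjSum T := by
    ext (_ | _) <;> simp
  have erase_inr (S : Finset V) (T : Finset W) (b : W) :
      (S.disjSum T).erase (.inr b) = S.disjSum (T.erase b) := by
    ext (_ | _) <;> simp
  simp [edgeSum, sum_disjSum, erase_inl, erase_inr, sum_add_distrib]

namespace IsHafnian

lemma unique [CharZero R] [IsLeftCancelMulZero R] {A : Matrix V V R} {h h' : Finset V → R}
    (hh : IsHafnian A h) (hh' : IsHafnian A h') : h = h' := by
  funext S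
  induction S using Finset.strongInduction with | H S ih => ?_
  obtain rfl | hS := S.eq_empty_or_nonempty
  · rw [hh.empty, hh'.empty]
  · refine mul_left_cancel₀ (Nat.cast_ne_zero.2 hS.card_ne_zero : (#S : R) ≠ 0) ?_
    rw [hh.card_mul, hh'.card_mul]
    refine sum_congr rfl fun a ha ↦ sum_congr rfl fun b hb ↦ ?_
    rw [ih _ ((erase_ssubset hb).trans (erase_ssubset ha))]

lemma submatrix {A : Matrix V V R} {h : Finset V → R} (hh : IsHafnian A h) (e : W ↪ V) :
    IsHafnian (A.submatrix e e) fun S ↦ h (S.map e) where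
  empty := by rw [map_empty, hh.empty]
  card_mul S := by rw [← edgeSum_map, ← hh.card_mul, card_map]

-- `exp (p + q) = exp p * exp q`
lemma add {A B : Matrix V V R} {f g : Finset V → R} (hf : IsHafnian A f) (hg : IsHafnian B g) :
    IsHafnian (A + B) (f ⋆ g) where
  empty := by simp [subsetConv, hf.empty, hg.empty]
  card_mul S := by
    rw [card_mul_subsetConv, funext hf.card_mul, funext hg.card_mul, subsetConv_comm (edgeSum A f),
      subsetConv_edgeSum, subsetConv_edgeSum, subsetConv_comm g]
    simp [edgeSum, add_mul, sum_add_distrib]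

lemma fromBlocks_zero_zero {A : Matrix V V R} {D : Matrix W W R} {f : Finset V → R}
    {g : Finset W → R} (hf : IsHafnian A f) (hg : IsHafnian D g) :
    IsHafnian (.fromBlocks A 0 0 D) fun S ↦ f S.toLeft * g S.toRight where
  empty := by simp [toLeft, toRight, hf.empty, hg.empty]
  card_mul := by
    refine sumEquiv.symm.surjective.forall.2 fun ⟨S, T⟩ ↦ ?_
    have edgeSum_left : edgeSum A (fun P ↦ f P * g T) S = edgeSum A f S * g T := by
      simp only [edgeSum, sum_mul, mul_assoc]
    have edgeSum_right : edgeSum D (fun P ↦ f S * g P) T = f S * edgeSum D g T := by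
      simp only [edgeSum, mul_sum, mul_left_comm]
    simp only [sumEquiv_symm_apply, edgeSum_fromBlocks, toLeft_disjSum, toRight_disjSum,
      card_disjSum, Matrix.zero_apply, zero_mul, sum_const_zero, add_zero, zero_add]
    rw [edgeSum_left, edgeSum_right, ← hf.card_mul, ← hg.card_mul]
    push_cast
    ring

end IsHafnian

lemma sum_smul_one_mul_ite_erase (x : R) (S T : Finset V) :
    ∑ a ∈ S, ∑ b ∈ T, (x • 1 : Matrix V V R) a b *
        (if S.erase a = T.erase b then x ^ #(S.erase a) else 0) =
      #S * if S = T then x ^ #S else 0 := by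
  rw [← nsmul_eq_mul, ← sum_const]
  refine sum_congr rfl fun a ha ↦ ?_
  simp only [Matrix.smul_apply, Matrix.one_apply, smul_eq_mul, mul_boole, ite_zero_mul, sum_ite_eq]
  by_cases haT : a ∈ T
  · have erase_eq : S.erase a = T.erase a ↔ S = T :=
      ⟨fun h ↦ by rw [← insert_erase ha, h, insert_erase haT], fun h ↦ by rw [h]⟩
    simp only [haT, if_true, erase_eq, mul_ite, mul_zero, ← pow_succ', card_erase_add_one ha]
  · simp [haT, show S ≠ T from fun h ↦ haT (h ▸ ha)]

lemma isHafnian_fromBlocks_zero_smul_one (x : R) :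
    IsHafnian (.fromBlocks 0 (x • 1) (x • 1) 0 : Matrix (V ⊕ V) (V ⊕ V) R)
      fun S ↦ if S.toLeft = S.toRight then x ^ #S.toLeft else 0 where
  empty := by simp [toLeft, toRight]
  card_mul := by
    refine sumEquiv.symm.surjective.forall.2 fun ⟨S, T⟩ ↦ ?_
    have ite_symm (S T : Finset V) :
        (if S = T then x ^ #S else 0) = if T = S then x ^ #T else 0 := by grind
    have edgeSum_zero (f : Finset V → R) (S : Finset V) : edgeSum 0 f S = 0 := by simp [edgeSum]
    simp only [sumEquiv_symm_apply, edgeSum_fromBlocks, edgeSum_zero, toLeft_disjSum,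
      toRight_disjSum, card_disjSum, zero_add, add_zero]
    rw [sum_smul_one_mul_ite_erase]
    simp only [ite_symm (S.erase _)]
    rw [sum_smul_one_mul_ite_erase, ← ite_symm S, ← add_mul, Nat.cast_add]

lemma IsHafnian.fromBlocks_smul_one {A : Matrix V V R} {h : Finset V → R} (hh : IsHafnian A h)
    (x : R) :
    IsHafnian (.fromBlocks A (x • 1) (x • 1) A)
      ((fun S ↦ if S.toLeft = S.toRight then x ^ #S.toLeft else 0) ⋆
        fun S ↦ h S.toLeft * h S.toRight) := by
  simpa [Matrix.fromBlocks_add] using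
    (isHafnian_fromBlocks_zero_smul_one x).add (hh.fromBlocks_zero_zero hh)

end IsHafnian

section injectiveTuples

variable {V R : Type*} [DecidableEq V] [AddCommMonoid R]

/-- The tuples of `n` distinct elements of `S`. -/
def injectiveTuples (n : ℕ) (S : Finset V) : Finset (Fin n → V) :=
  {f ∈ Fintype.piFinset fun _ ↦ S | f.Injective}

lemma mem_injectiveTuples {n : ℕ} {S : Finset V} {f : Fin n → V} :
    f ∈ injectiveTuples n S ↔ (∀ i, f i ∈ S) ∧ f.Injective := by
  simp [injectiveTuples]

lemma cons_mem_injectiveTuples {n : ℕ} {S : Finset V} {a : V} {f : Fin n → V} :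
    (Fin.cons a f : Fin (n + 1) → V) ∈ injectiveTuples (n + 1) S ↔
      a ∈ S ∧ f ∈ injectiveTuples n (S.erase a) := by
  simp only [mem_injectiveTuples, Fin.forall_fin_succ, Fin.cons_injective_iff, Fin.cons_zero,
    Fin.cons_succ, Set.mem_range, not_exists, mem_erase, forall_and]
  tauto

lemma sum_injectiveTuples_succ {n : ℕ} (S : Finset V) (Φ : (Fin (n + 1) → V) → R) :
    ∑ f ∈ injectiveTuples (n + 1) S, Φ f =
      ∑ a ∈ S, ∑ f ∈ injectiveTuples n (S.erase a), Φ (Fin.cons a f) := by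
  rw [sum_sigma']
  refine sum_nbij' (fun f ↦ ⟨f 0, Fin.tail f⟩) (fun p ↦ Fin.cons p.1 p.2)
    (fun f hf ↦ ?_) (fun p hp ↦ ?_) (fun f _ ↦ ?_) (fun p _ ↦ ?_) fun f _ ↦ ?_
  · rwa [mem_sigma, ← cons_mem_injectiveTuples, Fin.cons_self_tail]
  · exact cons_mem_injectiveTuples.2 (mem_sigma.1 hp)
  · exact Fin.cons_self_tail f
  · rfl
  · rw [Fin.cons_self_tail]

lemma sum_perm_comp_embedding {n : ℕ} (φ : Fin n ↪ V) (Φ : (Fin n → V) → R) :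
    ∑ σ : Equiv.Perm (Fin n), Φ (φ ∘ σ) = ∑ f ∈ injectiveTuples n (univ.map φ), Φ f := by
  refine sum_nbij (φ ∘ ·) (fun σ _ ↦ ?_) (fun σ _ τ _ h ↦ ?_) (fun f hf ↦ ?_) fun _ _ ↦ rfl
  · simp [mem_injectiveTuples, φ.injective.comp σ.injective]
  · exact Equiv.coe_fn_injective (φ.injective.comp_left h)
  · simp only [mem_coe, mem_injectiveTuples, mem_map, mem_univ, true_and] at hf
    obtain ⟨hfS, hf⟩ := hf
    choose g hg using hfS
    obtain rfl : φ ∘ g = f := funext hg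
    exact ⟨.ofBijective g (Finite.injective_iff_bijective.1 hf.of_comp), by simp, rfl⟩

end injectiveTuples

section pairingProd

variable {V R : Type*} [CommSemiring R]

/-- The product of the weights of the edges `(f 0, f 1), (f 2, f 3), …`. -/
def pairingProd (A : Matrix V V R) {k : ℕ} (f : Fin (2 * k) → V) : R :=
  ∏ j : Fin k, A (f ⟨2 * j, by omega⟩) (f ⟨2 * j + 1, by omega⟩)

lemma pairingProd_cons_cons (A : Matrix V V R) {k : ℕ} (a b : V) (f : Fin (2 * k) → V) :
    pairingProd A (k := k + 1) (Fin.cons a (Fin.cons b f : Fin (2 * k + 1) → V)) =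
      A a b * pairingProd A f :=
  Fin.prod_univ_succ _

lemma sum_pairingProd_succ [DecidableEq V] (A : Matrix V V R) (k : ℕ) (S : Finset V) :
    ∑ f ∈ injectiveTuples (2 * (k + 1)) S, pairingProd A f =
      edgeSum A (fun T ↦ ∑ f ∈ injectiveTuples (2 * k) T, pairingProd A f) S := by
  refine (sum_injectiveTuples_succ S _).trans (sum_congr rfl fun a _ ↦ ?_)
  refine (sum_injectiveTuples_succ (S.erase a) _).trans (sum_congr rfl fun b _ ↦ ?_)
  rw [mul_sum]
  exact sum_congr rfl fun f _ ↦ pairingProd_cons_cons A a b f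

end pairingProd

section haf

variable {V F : Type*} [DecidableEq V] [Field F]

lemma haf_of_odd {n : ℕ} (hn : Odd n) (A : Matrix (Fin n) (Fin n) F) : haf A = 0 :=
  dif_neg hn.not_two_dvd_nat

lemma haf_eq_sum_pairingProd {k : ℕ} (A : Matrix (Fin (2 * k)) (Fin (2 * k)) F) :
    haf A = ((k.factorial * 2 ^ k : ℕ) : F)⁻¹ *
      ∑ σ : Equiv.Perm (Fin (2 * k)), pairingProd A σ := by
  have half_eq : 2 * k / 2 = k := by omega
  rw [haf, dif_pos ⟨k, rfl⟩]
  congr 1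
  · rw [half_eq]
  · exact sum_congr rfl fun σ _ ↦ Fintype.prod_equiv (finCongr half_eq) _ _ fun _ ↦ rfl

lemma haf_submatrix {n k : ℕ} (hn : n = 2 * k) (A : Matrix V V F) (φ : Fin n ↪ V) :
    haf (A.submatrix φ φ) = ((k.factorial * 2 ^ k : ℕ) : F)⁻¹ *
      ∑ f ∈ injectiveTuples (2 * k) (univ.map φ), pairingProd A f := by
  subst hn
  rw [haf_eq_sum_pairingProd, ← sum_perm_comp_embedding]
  rfl

omit [Field F] in
lemma subm_eq_submatrix {M : ℕ} (A : Matrix (Fin M) (Fin M) F) (S : Finset (Fin M)) :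
    subm A S = A.submatrix (S.orderEmbOfFin rfl) (S.orderEmbOfFin rfl) := rfl

lemma haf_subm {M k : ℕ} (A : Matrix (Fin M) (Fin M) F) {S : Finset (Fin M)} (hS : #S = 2 * k) :
    haf (subm A S) = ((k.factorial * 2 ^ k : ℕ) : F)⁻¹ *
      ∑ f ∈ injectiveTuples (2 * k) S, pairingProd A f := by
  rw [subm_eq_submatrix]
  simpa using haf_submatrix hS A (S.orderEmbOfFin rfl).toEmbedding

lemma isHafnian_haf_subm [CharZero F] {M : ℕ} (A : Matrix (Fin M) (Fin M) F) :
    IsHafnian A fun S ↦ haf (subm A S) where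
  empty := by
    simpa [injectiveTuples, pairingProd, Function.injective_of_subsingleton] using
      haf_subm (k := 0) A card_empty
  card_mul S := by
    have card_eq {a b : Fin M} (ha : a ∈ S) (hb : b ∈ S.erase a) :
        #S = #((S.erase a).erase b) + 2 := by
      rw [← card_erase_add_one ha, ← card_erase_add_one hb]
    obtain ⟨k, hS⟩ | hS := Nat.even_or_odd #S
    · cases k with
      | zero => simp [card_eq_zero.1 hS, edgeSum]
      | succ k =>
        have edgeSum_haf : edgeSum A (fun T ↦ haf (subm A T)) S =
            ((k.factorial * 2 ^ k : ℕ) : F)⁻¹ *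
              edgeSum A (fun T ↦ ∑ f ∈ injectiveTuples (2 * k) T, pairingProd A f) S := by
          simp only [edgeSum, mul_sum (s := S), mul_sum (s := S.erase _)]
          refine sum_congr rfl fun a ha ↦ sum_congr rfl fun b hb ↦ ?_
          rw [haf_subm A (k := k) (by have := card_eq ha hb; omega), mul_left_comm]
        have k_ne : (k + 1 : F) ≠ 0 := k.cast_add_one_ne_zero
        rw [haf_subm A (k := k + 1) (by omega), sum_pairingProd_succ, edgeSum_haf, hS,
          Nat.factorial_succ]
        push_cast
        field_simp
        ring
    · rw [haf_of_odd hS, mul_zero, edgeSum]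
      refine (sum_eq_zero fun a ha ↦ sum_eq_zero fun b hb ↦ ?_).symm
      rw [haf_of_odd (by grind [card_eq ha hb]), mul_zero]

lemma IsHafnian.eval_muPlus_submatrix [CharZero F] {A : Matrix V V F} {h : Finset V → F}
    (hh : IsHafnian A h) {n : ℕ} (e : Fin n ↪ V) (z : F) :
    eval z (muPlus (A.submatrix e e)) = (h ⋆ fun T ↦ z ^ #T) (univ.map e) := by
  rw [subsetConv_map, ← (isHafnian_haf_subm _).unique (hh.submatrix e)]
  simp [muPlus, subsetConv, eval_finsetSum, card_sdiff]

lemma eval_muPlus_subm [CharZero F] {M : ℕ} (A : Matrix (Fin M) (Fin M) F) (S : Finset (Fin M))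
    (z : F) :
    eval z (muPlus (subm A S)) = ((fun T ↦ haf (subm A T)) ⋆ fun T ↦ z ^ #T) S := by
  rw [subm_eq_submatrix]
  simpa using (isHafnian_haf_subm A).eval_muPlus_submatrix (S.orderEmbOfFin rfl).toEmbedding z

lemma eval_muPlus_prism [CharZero F] {M : ℕ} (A : Matrix (Fin M) (Fin M) F) (x z : F) :
    eval z (muPlus (prism A x)) =
      ∑ U : Finset (Fin M), x ^ #U * eval z (muPlus (subm A Uᶜ)) ^ 2 := by
  have pow_card_eq : (fun S : Finset (Fin M ⊕ Fin M) ↦ z ^ #S) =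
      fun S ↦ z ^ #S.toLeft * z ^ #S.toRight := by
    simp only [← pow_add, card_toLeft_add_card_toRight]
  refine (((isHafnian_haf_subm A).fromBlocks_smul_one x).eval_muPlus_submatrix
    finSumFinEquiv.symm.toEmbedding z).trans ?_
  rw [map_univ_equiv, pow_card_eq, subsetConv_assoc,
    subsetConv_toLeft_mul_toRight (fun T ↦ haf (subm A T)) (fun T ↦ z ^ #T)
      (fun T ↦ haf (subm A T)) fun T ↦ z ^ #T,
    subsetConv_diagonal_univ fun U ↦ x ^ #U]
  simp only [eval_muPlus_subm, sq]

end haf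

theorem dgbs_duality_general {F : Type*} [Field F] [CharZero F] {M : ℕ}
    (A : Matrix (Fin M) (Fin M) F) (x z : F) :
    ∑ S : Finset (Fin M), eval z (muPlus (subm A S)) ^ 2 * x ^ (M - #S) =
      eval z (muPlus (prism A x)) := by
  rw [eval_muPlus_prism]
  refine Fintype.sum_bijective compl compl_bijective _ _ fun S ↦ ?_
  rw [compl_compl, card_compl, Fintype.card_fin, mul_comm]

/-- Duality: the signless displaced GBS polynomial of `G` equals the signless matching
polynomial of the prism `G □ P₂(x)`. -/
theorem dgbs_duality {M : ℕ} (G : SimpleGraph (Fin M)) [DecidableRel G.Adj]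
    (x z : ℝ) :
    ∑ S : Finset (Fin M),
        (Polynomial.eval z (muPlus (subm (G.adjMatrix ℝ) S))) ^ 2 * x ^ (M - S.card) =
      Polynomial.eval z (muPlus (prism (G.adjMatrix ℝ) x)) :=
  dgbs_duality_general (G.adjMatrix ℝ) x z
end

section
/- For the book graph B_n (n quadrilaterals sharing a common edge), the GBS polynomial is GBS_{B_n}(x) = (x² − 1)^{n−1} (x² − n − 1)². -/
open Finset Polynomial

/-- The adjacency matrix of the book graph `B_n`: vertices `0 = u`, `1 = v`,
`a_i = 2 + i` and `b_i = 2 + n + i` for `0 ≤ i < n`, with edges `(u,v)`, `(u,a_i)`,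
`(v,b_i)` and `(a_i,b_i)`. -/
def bookAdj (n : ℕ) : Matrix (Fin (2 * n + 2)) (Fin (2 * n + 2)) ℝ := fun i j =>
  if ((i.1 = 0 ∧ j.1 = 1) ∨ (i.1 = 0 ∧ 2 ≤ j.1 ∧ j.1 < 2 + n) ∨
        (i.1 = 1 ∧ 2 + n ≤ j.1 ∧ j.1 < 2 + 2 * n) ∨
        (2 ≤ i.1 ∧ i.1 < 2 + n ∧ j.1 = i.1 + n)) ∨
      ((j.1 = 0 ∧ i.1 = 1) ∨ (j.1 = 0 ∧ 2 ≤ i.1 ∧ i.1 < 2 + n) ∨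
        (j.1 = 1 ∧ 2 + n ≤ i.1 ∧ i.1 < 2 + 2 * n) ∨
        (2 ≤ j.1 ∧ j.1 < 2 + n ∧ i.1 = j.1 + n))
  then 1 else 0

/-!
Summing over permutations, the hafnian on `S` is `1 / (m! 2^m)` times a sum over sequences of `m`
disjoint ordered pairs in `S`; collecting the sequences by the partner of a fixed `i ∈ S` gives the
expansion along a row, `haf A_S = ∑_q A_{iq} haf A_{S ∖ {i, q}}`.

For the subgraph of the book on a set `W` of spine vertices, `{aᵢ | i ∈ A}` and `{bᵢ | i ∈ B}`, this
expansion yields the hafnian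
* `[A = B]` for `W = ∅`,
* `#{a ∈ A | A ∖ a = B}` for `W = {u}`, and symmetrically for `W = {v}`,
* `(1 + |A|) [A = B] + #{(a, b) ∈ A × Aᶜ | (A ∖ a) ∪ b = B}` for `W = {u, v}`.

Distinct choices of `a`, or of `(a, b)`, produce distinct sets `B`, all different from `A`. Hence
the squares sum over `B` to `1` for `W = ∅`, to `|A|` for `W = {u}`, and to
`(1 + |A|)² + |A| (n - |A|) = 1 + (n + 2) |A|` for `W = {u, v}`; for `W = {v}` the sum over `A`
is `|B|`. The remaining sums over one page set are the binomial expansion of `(x² - 1)ⁿ` and its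
version weighted by `|A|`.
-/

section PairSum

variable {V : Type*} [DecidableEq V]

lemma sum_sum_erase_insert {M : Type*} [AddCommMonoid M] {T : Finset V} {i : V} (hi : i ∉ T)
    (f : V → V → M) :
    ∑ p ∈ insert i T, ∑ q ∈ (insert i T).erase p, f p q =
      ∑ q ∈ T, (f i q + f q i) + ∑ p ∈ T, ∑ q ∈ T.erase p, f p q := by
  have inner : ∀ p ∈ T, ∑ q ∈ (insert i T).erase p, f p q = f p i + ∑ q ∈ T.erase p, f p q := by
    intro p hp
    have hip : i ≠ p := fun h => hi (h ▸ hp)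
    rw [erase_insert_of_ne hip, sum_insert fun h => hi (mem_of_mem_erase h)]
  rw [sum_insert hi, erase_insert hi, sum_congr rfl inner, sum_add_distrib, sum_add_distrib,
    add_assoc]

lemma sum_erase_comm {M : Type*} [AddCommMonoid M] (T : Finset V) (f : V → V → M) :
    ∑ p ∈ T, ∑ q ∈ T.erase p, f p q = ∑ q ∈ T, ∑ p ∈ T.erase q, f p q :=
  sum_comm' fun p q => by simp only [mem_erase]; tauto

lemma sum_sum_sum_erase_comm {M : Type*} [AddCommMonoid M] (T : Finset V) (f : V → V → V → M) :
    ∑ p ∈ T, ∑ q ∈ T.erase p, ∑ r ∈ (T.erase p).erase q, f p q r =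
      ∑ r ∈ T, ∑ p ∈ T.erase r, ∑ q ∈ (T.erase r).erase p, f p q r := by
  rw [sum_congr rfl fun p _ => sum_erase_comm (T.erase p) (f p), sum_erase_comm]
  simp only [erase_right_comm]

variable {R : Type*} [CommSemiring R] {A : Matrix V V R}

/-- The sum of `A p₁ q₁ * ⋯ * A pₘ qₘ` over all sequences of `m` disjoint ordered pairs
`(pⱼ, qⱼ)` in `S`. For symmetric `A` and `|S| = 2m` each perfect matching of `S` is counted
`m! 2^m` times. -/
def pairSum (A : Matrix V V R) : ℕ → Finset V → R
  | 0, _ => 1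
  | m + 1, S => ∑ p ∈ S, ∑ q ∈ S.erase p, A p q * pairSum A m ((S.erase p).erase q)

lemma pairSum_eq_zero_of_card_lt (A : Matrix V V R) {m : ℕ} {S : Finset V}
    (hS : S.card < 2 * m) : pairSum A m S = 0 := by
  induction m generalizing S with
  | zero => simp at hS
  | succ m ih =>
    refine sum_eq_zero fun p hp => sum_eq_zero fun q hq => ?_
    rw [ih, mul_zero]
    have := card_erase_add_one hp
    have := card_erase_add_one hq
    omega

lemma pairSum_succ_insert (hA : A.IsSymm) (m : ℕ) {T : Finset V} {i : V} (hi : i ∉ T) :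
    pairSum A (m + 1) (insert i T) =
      2 * ∑ q ∈ T, A i q * pairSum A m (T.erase q) +
        ∑ p ∈ T, ∑ q ∈ T.erase p, A p q * pairSum A m (insert i ((T.erase p).erase q)) := by
  rw [pairSum, sum_sum_erase_insert hi, mul_sum]
  congr 1
  · refine sum_congr rfl fun q _ => ?_
    rw [erase_right_comm (a := q), erase_insert hi, hA.apply]
    ring
  · refine sum_congr rfl fun p hp => sum_congr rfl fun q hq => ?_
    have hip : i ≠ p := fun h => hi (h ▸ hp)
    have hiq : i ≠ q := fun h => hi (h ▸ mem_of_mem_erase hq)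
    rw [erase_insert_of_ne hip, erase_insert_of_ne hiq]

-- A sequence of pairs either avoids `i` or contains `i` in one of its `m + 1` pairs, in one of
-- two positions.
lemma pairSum_insert (hA : A.IsSymm) (m : ℕ) {T : Finset V} {i : V} (hi : i ∉ T) :
    pairSum A (m + 1) (insert i T) =
      2 * (m + 1) * ∑ q ∈ T, A i q * pairSum A m (T.erase q) + pairSum A (m + 1) T := by
  induction m generalizing T with
  | zero =>
    rw [pairSum_succ_insert hA 0 hi]
    simp [pairSum]
  | succ m ih =>
    have avoid : ∀ p ∈ T, ∀ q ∈ T.erase p,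
        A p q * pairSum A (m + 1) (insert i ((T.erase p).erase q)) =
          2 * (m + 1) * ∑ r ∈ (T.erase p).erase q,
            A p q * (A i r * pairSum A m (((T.erase p).erase q).erase r)) +
          A p q * pairSum A (m + 1) ((T.erase p).erase q) := by
      intro p _ q _
      have hi' : i ∉ (T.erase p).erase q := fun h => hi (mem_of_mem_erase (mem_of_mem_erase h))
      rw [ih hi', ← mul_sum]
      ring
    have cover : ∑ p ∈ T, ∑ q ∈ T.erase p, ∑ r ∈ (T.erase p).erase q,
          A p q * (A i r * pairSum A m (((T.erase p).erase q).erase r)) =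
        ∑ r ∈ T, A i r * pairSum A (m + 1) (T.erase r) := by
      rw [sum_sum_sum_erase_comm]
      simp only [pairSum, mul_sum]
      refine sum_congr rfl fun r _ => sum_congr rfl fun p _ => sum_congr rfl fun q _ => ?_
      rw [erase_right_comm (a := q), erase_right_comm (a := p)]
      ring
    rw [pairSum_succ_insert hA _ hi, sum_congr rfl fun p hp => sum_congr rfl (avoid p hp)]
    simp only [sum_add_distrib, ← mul_sum] at cover ⊢
    rw [cover, ← pairSum]
    push_cast
    ring

lemma pairSum_eq_sum_erase (hA : A.IsSymm) {m : ℕ} {S : Finset V} (hS : S.card = 2 * (m + 1))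
    {i : V} (hi : i ∈ S) :
    pairSum A (m + 1) S =
      2 * (m + 1) * ∑ q ∈ S.erase i, A i q * pairSum A m ((S.erase i).erase q) := by
  have hcard : (S.erase i).card < 2 * (m + 1) := by rw [← hS]; exact card_erase_lt_of_mem hi
  conv_lhs => rw [← insert_erase hi]
  rw [pairSum_insert hA m (notMem_erase i S), pairSum_eq_zero_of_card_lt A hcard, add_zero]

end PairSum

section SumPerm

variable {V : Type*} {n : ℕ}

/-- The embedding `e` with the value `e p` removed from its image: the remaining values are
listed in order, except that `e 0` takes the place of `e p`, which is what
`Equiv.Perm.decomposeFin` requires. -/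
def dropEmbedding (e : Fin (n + 1) ↪ V) (p : Fin (n + 1)) : Fin n ↪ V :=
  ((Fin.succEmb n).trans (Equiv.swap 0 p).toEmbedding).trans e

lemma map_dropEmbedding_univ [DecidableEq V] (e : Fin (n + 1) ↪ V) (p : Fin (n + 1)) :
    univ.map (dropEmbedding e p) = (univ.map e).erase (e p) := by
  have hsucc : univ.map (Fin.succEmb n) = univ.erase 0 := by
    ext i
    simp [Fin.exists_succ_eq]
  rw [dropEmbedding, ← map_map, ← map_map, hsucc, map_erase, map_univ_equiv, map_erase]
  simp

lemma sum_perm_comp_succ {M : Type*} [AddCommMonoid M] (e : Fin (n + 1) ↪ V)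
    (φ : (Fin (n + 1) → V) → M) :
    ∑ σ : Equiv.Perm (Fin (n + 1)), φ (e ∘ σ) =
      ∑ p, ∑ τ : Equiv.Perm (Fin n), φ (Fin.cons (e p) (dropEmbedding e p ∘ τ)) := by
  rw [← Equiv.Perm.decomposeFin.symm.sum_comp, Fintype.sum_prod_type]
  refine sum_congr rfl fun p _ => sum_congr rfl fun τ _ => congrArg φ (funext fun i => ?_)
  cases i using Fin.cases <;> simp [dropEmbedding]

variable {R : Type*} [CommSemiring R]

/-- The product of the entries of `A` at the consecutive pairs `(f 0, f 1), (f 2, f 3), …`. -/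
def pairProd (A : Matrix V V R) (m : ℕ) (f : Fin (2 * m) → V) : R :=
  ∏ j : Fin m, A (f ⟨2 * j, by omega⟩) (f ⟨2 * j + 1, by omega⟩)

lemma pairProd_cons_cons (A : Matrix V V R) (m : ℕ) (p q : V) (f : Fin (2 * m) → V) :
    pairProd A (m + 1) (Fin.cons p (Fin.cons q f : Fin (2 * m + 1) → V)) =
      A p q * pairProd A m f :=
  Fin.prod_univ_succ _

lemma sum_perm_pairProd [DecidableEq V] (A : Matrix V V R) (m : ℕ) (e : Fin (2 * m) ↪ V) :
    ∑ σ : Equiv.Perm (Fin (2 * m)), pairProd A m (e ∘ σ) = pairSum A m (univ.map e) := by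
  induction m with
  | zero => simp [pairProd, pairSum]
  | succ m ih =>
    rw [pairSum, sum_map]
    refine (sum_perm_comp_succ (n := 2 * m + 1) e _).trans (sum_congr rfl fun p _ => ?_)
    rw [← map_dropEmbedding_univ, sum_map]
    refine (sum_perm_comp_succ (dropEmbedding e p) fun g => pairProd A (m + 1)
      (Fin.cons (e p) g)).trans (sum_congr rfl fun q _ => ?_)
    refine (sum_congr rfl fun τ _ => pairProd_cons_cons A m _ _ _).trans ?_
    rw [← mul_sum]
    exact congrArg _ ((ih _).trans (congrArg _ (map_dropEmbedding_univ _ _)))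

end SumPerm

section Hafnian

variable {V F : Type*} [Field F] {n : ℕ}

lemma haf_submatrix_of_odd (A : Matrix V V F) (e : Fin n → V) (hn : Odd n) :
    haf (A.submatrix e e) = 0 :=
  dif_neg fun h => Nat.not_even_iff_odd.mpr hn (even_iff_two_dvd.mpr h)

lemma haf_submatrix_of_eq_two_mul [DecidableEq V] (A : Matrix V V F) (e : Fin n ↪ V) {m : ℕ}
    (hn : n = 2 * m) :
    haf (A.submatrix e e) = ((m.factorial * 2 ^ m : ℕ) : F)⁻¹ * pairSum A m (univ.map e) := by
  subst hn
  have hm : 2 * m / 2 = m := by omega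
  rw [haf, dif_pos (dvd_mul_right 2 m), ← sum_perm_pairProd]
  refine congrArg₂ (· * ·) (by rw [hm]) (sum_congr rfl fun σ _ => ?_)
  exact Fintype.prod_equiv (finCongr hm) _ _ fun j => rfl

/-- The hafnian of the principal submatrix of `A` with rows and columns in `S`. Its entries are
listed in an arbitrary order, on which the hafnian does not depend. -/
noncomputable def hafOn (A : Matrix V V F) (S : Finset V) : F :=
  haf (A.submatrix S.equivFin.symm.asEmbedding S.equivFin.symm.asEmbedding)

lemma hafOn_of_odd_card (A : Matrix V V F) {S : Finset V} (hS : Odd S.card) : hafOn A S = 0 :=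
  haf_submatrix_of_odd A _ hS

lemma hafOn_of_card_eq [DecidableEq V] (A : Matrix V V F) {S : Finset V} {m : ℕ}
    (hS : S.card = 2 * m) :
    hafOn A S = ((m.factorial * 2 ^ m : ℕ) : F)⁻¹ * pairSum A m S := by
  have himage : univ.map S.equivFin.symm.asEmbedding = S := by
    rw [Equiv.asEmbedding, ← map_map, map_univ_equiv, univ_eq_attach, attach_map_val]
  rw [hafOn, haf_submatrix_of_eq_two_mul A _ hS, himage]

lemma haf_submatrix_s12 (A : Matrix V V F) (e : Fin n ↪ V) :
    haf (A.submatrix e e) = hafOn A (univ.map e) := by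
  classical
  have hcard : (univ.map e).card = n := by rw [card_map, card_fin]
  rcases n.even_or_odd' with ⟨m, hm | hm⟩
  · rw [haf_submatrix_of_eq_two_mul A e hm, hafOn_of_card_eq A (hcard.trans hm)]
  · have hodd : Odd n := ⟨m, hm⟩
    rw [haf_submatrix_of_odd A e hodd, hafOn_of_odd_card A (hcard.symm ▸ hodd)]

lemma hafOn_empty (A : Matrix V V F) : hafOn A ∅ = 1 := by
  classical
  simp [hafOn_of_card_eq A (m := 0) card_empty, pairSum]

lemma hafOn_eq_sum_erase [DecidableEq V] [CharZero F] {A : Matrix V V F} (hA : A.IsSymm)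
    {S : Finset V} {i : V} (hi : i ∈ S) :
    hafOn A S = ∑ q ∈ S.erase i, A i q * hafOn A ((S.erase i).erase q) := by
  have hcard : ∀ q ∈ S.erase i, S.card = ((S.erase i).erase q).card + 2 := fun q hq => by
    have := card_erase_add_one hi
    have := card_erase_add_one hq
    omega
  rcases S.card.even_or_odd' with ⟨k, hk | hk⟩
  · obtain ⟨m, rfl⟩ : ∃ m, k = m + 1 :=
      Nat.exists_eq_add_one_of_ne_zero (by rintro rfl; simp_all)
    have hrest : ∀ q ∈ S.erase i, A i q * hafOn A ((S.erase i).erase q) =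
        ((m.factorial * 2 ^ m : ℕ) : F)⁻¹ * (A i q * pairSum A m ((S.erase i).erase q)) := by
      intro q hq
      have := hcard q hq
      rw [hafOn_of_card_eq A (m := m) (by omega), mul_left_comm]
    rw [hafOn_of_card_eq A hk, pairSum_eq_sum_erase hA hk hi, sum_congr rfl hrest, ← mul_sum,
      Nat.factorial_succ]
    have : (m.factorial : F) ≠ 0 := mod_cast m.factorial_ne_zero
    have : (m + 1 : F) ≠ 0 := mod_cast m.succ_ne_zero
    push_cast
    field_simp
    ring
  · rw [hafOn_of_odd_card A ⟨k, hk⟩]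
    refine (sum_eq_zero fun q hq => ?_).symm
    have hodd : Odd ((S.erase i).erase q).card := by have := hcard q hq; grind
    rw [hafOn_of_odd_card A hodd, mul_zero]

end Hafnian

section GBSPoly

variable {V F : Type*} [Field F]

/-- The factor `(-1)^{c/2} x^{M-c}` with which a vertex subset of size `c` enters the GBS
polynomial of a graph with `M` vertices. -/
noncomputable def gbsWeight (F : Type*) [Field F] (M c : ℕ) : F[X] :=
  (-1) ^ (c / 2) * X ^ (M - c)

lemma gbsWeight_two_mul {n k : ℕ} (hk : k ≤ n) :
    gbsWeight F (2 * n + 2) (2 * k) = X ^ 2 * ((-1) ^ k * (X ^ 2) ^ (n - k)) := by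
  rw [gbsWeight, Nat.mul_div_cancel_left k two_pos,
    show 2 * n + 2 - 2 * k = 2 + 2 * (n - k) by omega, pow_add, pow_mul]
  ring

lemma gbsWeight_two_mul_add_two (n k : ℕ) :
    gbsWeight F (2 * n + 2) (2 * k + 2) = -((-1) ^ k * (X ^ 2) ^ (n - k)) := by
  rw [gbsWeight, show (2 * k + 2) / 2 = k + 1 by omega,
    show 2 * n + 2 - (2 * k + 2) = 2 * (n - k) by omega, pow_mul]
  ring

/-- The GBS polynomial of a matrix indexed by an arbitrary finite type of vertices. -/
noncomputable def gbsPoly [Fintype V] (A : Matrix V V F) : F[X] :=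
  ∑ S : Finset V, hafOn A S ^ 2 • gbsWeight F (Fintype.card V) S.card

lemma GBS_submatrix [Fintype V] {M : ℕ} (A : Matrix V V F) (e : Fin M ≃ V) :
    GBS (A.submatrix e e) = gbsPoly A := by
  refine Fintype.sum_equiv e.finsetCongr _ _ fun S => ?_
  have hsubm : haf (subm (A.submatrix e e) S) = hafOn A (S.map e.toEmbedding) := by
    have himage : S.map e.toEmbedding =
        univ.map ((S.orderEmbOfFin rfl).toEmbedding.trans e.toEmbedding) := by
      rw [← map_map]
      exact congrArg _ (map_orderEmbOfFin_univ S rfl).symm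
    rw [himage, ← haf_submatrix_s12]
    rfl
  rw [hsubm, Equiv.finsetCongr_apply, card_map, gbsWeight, ← Fintype.card_congr e,
    Fintype.card_fin, smul_eq_C_mul]
  simp only [map_mul, map_pow, map_neg, map_one]
  ring

end GBSPoly

section FinsetSum

lemma sum_finset_disjSum {α β M : Type*} [Fintype α] [Fintype β] [AddCommMonoid M]
    (f : Finset (α ⊕ β) → M) : ∑ S, f S = ∑ S : Finset α, ∑ T : Finset β, f (S.disjSum T) := by
  rw [← Fintype.sum_prod_type']
  exact (sumEquiv.symm.toEquiv.sum_comp f).symm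

lemma erase_inl_disjSum {α β : Type*} [DecidableEq α] [DecidableEq β] (S : Finset α)
    (T : Finset β) (a : α) : (S.disjSum T).erase (.inl a) = (S.erase a).disjSum T := by
  ext (x | x) <;> simp

lemma erase_inr_disjSum {α β : Type*} [DecidableEq α] [DecidableEq β] (S : Finset α)
    (T : Finset β) (b : β) : (S.disjSum T).erase (.inr b) = S.disjSum (T.erase b) := by
  ext (x | x) <;> simp

lemma sum_sq_sum_ite_smul {α β R M : Type*} [Fintype β] [DecidableEq β] [Semiring R]
    [AddCommMonoid M] [Module R M] {s : Finset α} {g : α → β} (hg : Set.InjOn g s) (w : β → M) :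
    ∑ b, (∑ x ∈ s, if g x = b then (1 : R) else 0) ^ 2 • w b = ∑ x ∈ s, w (g x) := by
  have hindicator : ∀ b, (∑ x ∈ s, if g x = b then (1 : R) else 0) =
      if b ∈ s.image g then 1 else 0 := fun b => by
    rw [← sum_image (f := fun c => if c = b then (1 : R) else 0) hg, sum_ite_eq']
  simp only [hindicator, ite_pow, one_pow, ne_eq, two_ne_zero, not_false_eq_true, zero_pow,
    ite_smul, one_smul, zero_smul, sum_ite_mem, univ_inter]
  exact sum_image hg

lemma sum_card_mul_pow_mul_pow {ι R : Type*} [Fintype ι] [CommSemiring R] (y z : R) :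
    ∑ A : Finset ι, (A.card : R) * (y ^ A.card * z ^ (Fintype.card ι - A.card)) =
      Fintype.card ι * y * (y + z) ^ (Fintype.card ι - 1) := by
  have hchoose := sum_powerset_apply_card
    (fun k => (k : R) * (y ^ k * z ^ (Fintype.card ι - k))) (x := (univ : Finset ι))
  rw [powerset_univ, card_univ] at hchoose
  rw [hchoose]
  cases Fintype.card ι with
  | zero => simp
  | succ n =>
    rw [sum_range_succ', Nat.cast_zero, zero_mul, smul_zero, add_zero, Nat.add_sub_cancel,
      add_pow, mul_sum]
    refine sum_congr rfl fun k _ => ?_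
    have habsorb : ((n + 1) * n.choose k : R) = (n + 1).choose (k + 1) * (k + 1) :=
      mod_cast congrArg (Nat.cast (R := R)) (Nat.add_one_mul_choose_eq n k)
    rw [nsmul_eq_mul, Nat.add_sub_add_right, Nat.cast_add_one, Nat.cast_add_one]
    calc ((n + 1).choose (k + 1) : R) * ((k + 1) * (y ^ (k + 1) * z ^ (n - k)))
        = ((n + 1).choose (k + 1) * (k + 1)) * (y ^ (k + 1) * z ^ (n - k)) := by ring
      _ = (n + 1) * y * (y ^ k * z ^ (n - k) * n.choose k) := by rw [← habsorb]; ring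

variable {ι : Type*} [DecidableEq ι]

lemma insert_erase_ne {A : Finset ι} {a b : ι} (hb : b ∉ A) : insert b (A.erase a) ≠ A :=
  fun h => hb (h ▸ mem_insert_self b _)

lemma card_insert_erase {A : Finset ι} {a b : ι} (ha : a ∈ A) (hb : b ∉ A) :
    (insert b (A.erase a)).card = A.card := by
  rw [card_insert_of_notMem fun h => hb (mem_of_mem_erase h), card_erase_add_one ha]

variable [Fintype ι]

lemma sum_ite_erase_eq {M : Type*} [AddCommMonoid M] (B C : Finset ι) (r : M) :
    (∑ b ∈ B, if B.erase b = C then r else 0) = ∑ b ∈ Cᶜ, if insert b C = B then r else 0 := by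
  rw [← sum_filter, ← sum_filter]
  congr 1
  ext b
  simp only [mem_filter, mem_compl]
  constructor
  · rintro ⟨hb, rfl⟩
    exact ⟨notMem_erase b B, insert_erase hb⟩
  · rintro ⟨hb, rfl⟩
    exact ⟨mem_insert_self b C, erase_insert hb⟩

lemma insert_erase_injOn (A : Finset ι) :
    Set.InjOn (fun x : ι × ι => insert x.2 (A.erase x.1)) (A ×ˢ Aᶜ : Finset (ι × ι)) := by
  rintro ⟨a, b⟩ hx ⟨a', b'⟩ hx' h
  simp only [coe_product, Set.mem_prod, mem_coe, mem_compl] at hx hx'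
  simp only [Finset.ext_iff] at h
  have ha := h a
  have hb := h b
  grind

end FinsetSum

section Book

/-- The adjacency matrix of the book graph with pages indexed by `ι`. The spine is
`u = inl false`, `v = inl true`, and the page `i` has the further vertices
`aᵢ = inr (inl i)` and `bᵢ = inr (inr i)`. -/
def bookMatrix (ι F : Type*) [DecidableEq ι] [Zero F] [One F] :
    Matrix (Bool ⊕ (ι ⊕ ι)) (Bool ⊕ (ι ⊕ ι)) F :=
  .fromBlocks (.of fun s t => if s = t then 0 else 1)
    (.of fun s x => if s = x.isRight then 1 else 0)
    (.of fun x s => if s = x.isRight then 1 else 0)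
    (.fromBlocks 0 1 1 0)

lemma bookMatrix_isSymm {ι F : Type*} [DecidableEq ι] [Zero F] [One F] :
    (bookMatrix ι F).IsSymm := by
  refine .fromBlocks ?_ rfl (.fromBlocks Matrix.isSymm_zero Matrix.transpose_one
    Matrix.isSymm_zero)
  ext s t
  simp [eq_comm]

variable {ι F : Type*} [DecidableEq ι] [Field F]

/-- The hafnian of the book graph on the vertices `{inl s | s ∈ W} ∪ {aᵢ | i ∈ A} ∪
{bᵢ | i ∈ B}`. -/
noncomputable def bookHaf (F : Type*) [Field F] (W : Finset Bool) (A B : Finset ι) : F :=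
  hafOn (bookMatrix ι F) (W.disjSum (A.disjSum B))

variable [CharZero F]

lemma bookHaf_eq_sum_of_mem_spine (W : Finset Bool) (A B : Finset ι) {s : Bool} (hs : s ∈ W) :
    bookHaf F W A B =
      ∑ t ∈ W.erase s, bookHaf F ((W.erase s).erase t) A B +
        ((∑ a ∈ A, if s = false then bookHaf F (W.erase s) (A.erase a) B else 0) +
          ∑ b ∈ B, if s = true then bookHaf F (W.erase s) A (B.erase b) else 0) := by
  have hmem : Sum.inl s ∈ W.disjSum (A.disjSum B) := inl_mem_disjSum.mpr hs
  rw [bookHaf, hafOn_eq_sum_erase bookMatrix_isSymm hmem]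
  simp only [erase_inl_disjSum, erase_inr_disjSum, sum_disjSum]
  refine congrArg₂ _ (sum_congr rfl fun t ht => ?_)
    (congrArg₂ _ (sum_congr rfl fun a _ => boole_mul _ _) (sum_congr rfl fun b _ => boole_mul _ _))
  exact (congrArg (· * _) (if_neg (ne_of_mem_erase ht).symm)).trans (one_mul _)

lemma bookHaf_empty_eq_sum (A B : Finset ι) {a : ι} (ha : a ∈ A) :
    bookHaf F ∅ A B = ∑ b ∈ B, if a = b then bookHaf F ∅ (A.erase a) (B.erase b) else 0 := by
  have hmem : Sum.inr (Sum.inl a) ∈ (∅ : Finset Bool).disjSum (A.disjSum B) :=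
    inr_mem_disjSum.mpr (inl_mem_disjSum.mpr ha)
  rw [bookHaf, hafOn_eq_sum_erase bookMatrix_isSymm hmem]
  simp only [erase_inl_disjSum, erase_inr_disjSum, sum_disjSum, sum_empty, zero_add]
  rw [sum_eq_zero fun a' _ => zero_mul _, zero_add]
  exact sum_congr rfl fun b _ => (congrArg (· * _) Matrix.one_apply).trans (boole_mul _ _)

lemma bookHaf_empty_empty_of_nonempty {B : Finset ι} (hB : B.Nonempty) : bookHaf F ∅ ∅ B = 0 := by
  obtain ⟨b, hb⟩ := hB
  have hmem : Sum.inr (Sum.inr b) ∈ (∅ : Finset Bool).disjSum ((∅ : Finset ι).disjSum B) :=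
    inr_mem_disjSum.mpr (inr_mem_disjSum.mpr hb)
  rw [bookHaf, hafOn_eq_sum_erase bookMatrix_isSymm hmem]
  simp only [erase_inr_disjSum, sum_disjSum, sum_empty, zero_add]
  exact sum_eq_zero fun b' _ => zero_mul _

lemma bookHaf_empty (A B : Finset ι) : bookHaf F ∅ A B = if A = B then 1 else 0 := by
  induction A using Finset.induction_on generalizing B with
  | empty =>
    rcases B.eq_empty_or_nonempty with rfl | hB
    · exact hafOn_empty _
    · rw [bookHaf_empty_empty_of_nonempty hB, if_neg hB.ne_empty.symm]
  | insert a A ha ih =>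
    rw [bookHaf_empty_eq_sum _ _ (mem_insert_self a A), sum_ite_eq, erase_insert ha, ih]
    split_ifs <;> grind

lemma bookHaf_false (A B : Finset ι) :
    bookHaf F {false} A B = ∑ a ∈ A, if A.erase a = B then 1 else 0 := by
  simp [bookHaf_eq_sum_of_mem_spine _ A B (mem_singleton_self false), bookHaf_empty]

lemma bookHaf_true (A B : Finset ι) :
    bookHaf F {true} A B = ∑ b ∈ B, if B.erase b = A then 1 else 0 := by
  simp [bookHaf_eq_sum_of_mem_spine _ A B (mem_singleton_self true), bookHaf_empty,
    eq_comm (a := A)]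

lemma bookHaf_true_eq_bookHaf_false (A B : Finset ι) :
    bookHaf F {true} A B = bookHaf F {false} B A := by
  rw [bookHaf_true, bookHaf_false]

variable [Fintype ι]

lemma bookHaf_univ (A B : Finset ι) :
    bookHaf F univ A B = (if A = B then 1 + (A.card : F) else 0) +
      ∑ x ∈ A ×ˢ Aᶜ, if insert x.2 (A.erase x.1) = B then 1 else 0 := by
  have hbool : (univ : Finset Bool).erase false = {true} := rfl
  have hexpand : bookHaf F univ A B = (if A = B then 1 else 0) +
      ∑ a ∈ A, ∑ b ∈ B, if B.erase b = A.erase a then 1 else 0 := by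
    rw [bookHaf_eq_sum_of_mem_spine _ A B (mem_univ false), hbool]
    simp [bookHaf_empty, bookHaf_true]
  have hinner : ∀ a ∈ A, (∑ b ∈ B, if B.erase b = A.erase a then (1 : F) else 0) =
      (if A = B then 1 else 0) + ∑ b ∈ Aᶜ, if insert b (A.erase a) = B then 1 else 0 := by
    intro a ha
    rw [sum_ite_erase_eq, compl_erase, sum_insert (by simpa), insert_erase ha]
  rw [hexpand, sum_congr rfl hinner, sum_add_distrib, sum_const, sum_product]
  split_ifs <;> simp [add_assoc]

section SumSq

variable {M : Type*} [AddCommMonoid M] [Module F M] (w : ℕ → M)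

lemma sum_bookHaf_empty_sq_smul (A : Finset ι) :
    ∑ B, bookHaf F ∅ A B ^ 2 • w (A.card + B.card) = w (2 * A.card) := by
  simp [bookHaf_empty, two_mul]

lemma sum_bookHaf_false_sq_smul (A : Finset ι) :
    ∑ B, bookHaf F {false} A B ^ 2 • w (1 + (A.card + B.card)) = A.card • w (2 * A.card) := by
  simp only [bookHaf_false]
  rw [sum_sq_sum_ite_smul (erase_injOn A) fun B : Finset ι => w (1 + (A.card + B.card))]
  refine sum_eq_card_nsmul fun a ha => ?_
  have := card_erase_add_one ha
  congr 1
  omega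

lemma sum_bookHaf_true_sq_smul (B : Finset ι) :
    ∑ A, bookHaf F {true} A B ^ 2 • w (1 + (A.card + B.card)) = B.card • w (2 * B.card) := by
  simp only [bookHaf_true_eq_bookHaf_false, add_comm _ B.card]
  exact sum_bookHaf_false_sq_smul w B

lemma sum_bookHaf_univ_sq_smul (A : Finset ι) :
    ∑ B, bookHaf F univ A B ^ 2 • w (2 + (A.card + B.card)) =
      (1 + (Fintype.card ι + 2) * A.card) • w (2 * A.card + 2) := by
  have hsq : ∀ B, bookHaf F univ A B ^ 2 = (if A = B then (1 + (A.card : F)) ^ 2 else 0) +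
      (∑ x ∈ A ×ˢ Aᶜ, if insert x.2 (A.erase x.1) = B then 1 else 0) ^ 2 := by
    intro B
    rw [bookHaf_univ]
    split_ifs with hAB
    · rw [sum_eq_zero fun x hx => if_neg (hAB ▸ insert_erase_ne
        (mem_compl.mp (mem_product.mp hx).2))]
      ring
    · ring
  have hdiag : ∑ B, (if A = B then (1 + (A.card : F)) ^ 2 else 0) • w (2 + (A.card + B.card)) =
      (1 + A.card) ^ 2 • w (2 * A.card + 2) := by
    rw [← Nat.cast_smul_eq_nsmul F]
    simp [ite_smul, two_mul, add_comm]
  have hswap : ∀ x ∈ A ×ˢ Aᶜ, w (2 + (A.card + (insert x.2 (A.erase x.1)).card)) =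
      w (2 * A.card + 2) := by
    intro x hx
    rw [mem_product, mem_compl] at hx
    rw [card_insert_erase hx.1 hx.2, ← two_mul, add_comm]
  have hcoeff : (1 + A.card) ^ 2 + A.card * Aᶜ.card =
      1 + (Fintype.card ι + 2) * A.card := by
    rw [← card_add_card_compl A]
    ring
  simp only [hsq, add_smul (_ : F), sum_add_distrib]
  rw [sum_sq_sum_ite_smul (insert_erase_injOn A) fun B : Finset ι => w (2 + (A.card + B.card)),
    hdiag, sum_eq_card_nsmul hswap, card_product, ← add_nsmul, hcoeff]

end SumSq

lemma gbsPoly_bookMatrix_eq_sum :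
    gbsPoly (bookMatrix ι F) = ∑ A : Finset ι,
      ((1 + 2 * A.card) • gbsWeight F (2 * Fintype.card ι + 2) (2 * A.card) +
        (1 + (Fintype.card ι + 2) * A.card) •
          gbsWeight F (2 * Fintype.card ι + 2) (2 * A.card + 2)) := by
  set w := gbsWeight F (2 * Fintype.card ι + 2)
  have hcard : Fintype.card (Bool ⊕ (ι ⊕ ι)) = 2 * Fintype.card ι + 2 := by
    simp only [Fintype.card_sum, Fintype.card_bool]
    ring
  have hspine : (univ : Finset (Finset Bool)) = {∅, {false}, {true}, univ} := by decide
  have hsplit : gbsPoly (bookMatrix ι F) = ∑ W : Finset Bool, ∑ A : Finset ι, ∑ B : Finset ι,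
      bookHaf F W A B ^ 2 • w (W.card + (A.card + B.card)) := by
    simp only [gbsPoly, sum_finset_disjSum, card_disjSum, hcard]
    rfl
  rw [hsplit, hspine, sum_insert (by decide), sum_insert (by decide), sum_insert (by decide),
    sum_singleton]
  simp only [card_empty, card_singleton, card_univ, Fintype.card_bool, zero_add]
  rw [sum_comm (s := univ) (t := univ) (f := fun A B => bookHaf F {true} A B ^ 2 • _)]
  simp only [sum_bookHaf_empty_sq_smul, sum_bookHaf_false_sq_smul, sum_bookHaf_true_sq_smul,
    sum_bookHaf_univ_sq_smul, ← sum_add_distrib]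
  refine sum_congr rfl fun A _ => ?_
  rw [add_nsmul _ 1 (2 * A.card), one_nsmul, mul_nsmul _ 2, two_nsmul, smul_add]
  abel

theorem gbs_book_general [Nonempty ι] :
    gbsPoly (bookMatrix ι F) = (X ^ 2 - 1) ^ (Fintype.card ι - 1) *
      (X ^ 2 - C ((Fintype.card ι : F) + 1)) ^ 2 := by
  set n := Fintype.card ι
  set p : Finset ι → F[X] := fun A => (-1) ^ A.card * (X ^ 2) ^ (n - A.card)
  have hsum : ∑ A, p A = (X ^ 2 - 1) ^ n := by
    rw [Fintype.sum_pow_mul_eq_add_pow, neg_add_eq_sub]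
  have hsum_card : ∑ A, (A.card : F[X]) * p A = -(n : F[X]) * (X ^ 2 - 1) ^ (n - 1) := by
    rw [sum_card_mul_pow_mul_pow, neg_add_eq_sub, mul_neg_one]
  have hpow : (X ^ 2 - 1 : F[X]) ^ n = (X ^ 2 - 1) ^ (n - 1) * (X ^ 2 - 1) :=
    (pow_sub_one_mul Fintype.card_ne_zero _).symm
  calc gbsPoly (bookMatrix ι F)
      = ∑ A : Finset ι,
          ((X ^ 2 - 1) * p A + (2 * X ^ 2 - ((n : F[X]) + 2)) * ((A.card : F[X]) * p A)) := by
        rw [gbsPoly_bookMatrix_eq_sum]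
        refine sum_congr rfl fun A _ => ?_
        rw [gbsWeight_two_mul (card_le_univ A), gbsWeight_two_mul_add_two, nsmul_eq_mul,
          nsmul_eq_mul]
        push_cast
        ring
    _ = (X ^ 2 - 1) * (X ^ 2 - 1) ^ n +
          (2 * X ^ 2 - ((n : F[X]) + 2)) * (-(n : F[X]) * (X ^ 2 - 1) ^ (n - 1)) := by
        rw [sum_add_distrib, ← mul_sum, ← mul_sum, hsum, hsum_card]
    _ = (X ^ 2 - 1) ^ (n - 1) * (X ^ 2 - C ((n : F) + 1)) ^ 2 := by
        rw [hpow, C_add, C_1, map_natCast]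
        ring

/-- The numbering of the vertices of the book graph used by `bookAdj`: first the spine `u, v`,
then `a₀, …, aₙ₋₁`, then `b₀, …, bₙ₋₁`. -/
def bookEquiv (n : ℕ) : Bool ⊕ (Fin n ⊕ Fin n) ≃ Fin (2 * n + 2) :=
  ((finTwoEquiv.symm.sumCongr finSumFinEquiv).trans finSumFinEquiv).trans
    (finCongr (by omega))

lemma bookAdj_eq_submatrix (n : ℕ) :
    bookAdj n = (bookMatrix (Fin n) ℝ).submatrix (bookEquiv n).symm (bookEquiv n).symm := by
  suffices h : (bookAdj n).submatrix (bookEquiv n) (bookEquiv n) = bookMatrix (Fin n) ℝ by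
    rw [← h]
    simp
  have hu : (bookEquiv n (.inl false)).1 = 0 := rfl
  have hv : (bookEquiv n (.inl true)).1 = 1 := rfl
  have ha : ∀ i, (bookEquiv n (.inr (.inl i))).1 = 2 + i := fun i => rfl
  have hb : ∀ i, (bookEquiv n (.inr (.inr i))).1 = 2 + (n + i) := fun i => rfl
  ext ((_ | _) | x | x) ((_ | _) | y | y) <;>
    simp only [Matrix.submatrix_apply, bookAdj, hu, hv, ha, hb, bookMatrix,
      Matrix.fromBlocks_apply₁₁, Matrix.fromBlocks_apply₁₂, Matrix.fromBlocks_apply₂₁,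
      Matrix.fromBlocks_apply₂₂,
      Matrix.of_apply, Matrix.zero_apply, Matrix.one_apply, Sum.isRight_inl, Sum.isRight_inr,
      Fin.ext_iff] <;>
    grind

end Book

/-- The GBS polynomial of the book graph `B_n`. -/
theorem gbs_book (n : ℕ) (hn : 1 ≤ n) :
    GBS (bookAdj n) =
      (Polynomial.X ^ 2 - 1) ^ (n - 1) *
        (Polynomial.X ^ 2 - Polynomial.C ((n : ℝ) + 1)) ^ 2 := by
  have : Nonempty (Fin n) := ⟨0, hn⟩
  rw [bookAdj_eq_submatrix, GBS_submatrix, gbs_book_general, Fintype.card_fin]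
end
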